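/- arXiv:2202.09034 — 2 statements merged into one kernel-verified Lean document; each statement's English description precedes it below -/
import Mathlib

section
/- Let S = {ψ_1, …, ψ_N} be a set of pairwise orthogonal vectors in ℂ^{d_A} ⊗ ℂ^{d_B}. Then dim_ℂ D_{A|B}(S) ≤ d_B² − 1. -/
/-!
The vector `Σ_i ψ_{k,i} ⊗ conj(ψ_{l,i})`, read as a `dB × dB` matrix, has trace `⟪ψ_l, ψ_k⟫`, which
vanishes for `k ≠ l`. Hence `DAB` lies in the kernel of the trace functional `traceForm`. If `dB > 0`
this functional is nonzero, so its kernel is a proper subspace of a space of dimension `dB ^ 2`; if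
`dB = 0` the ambient space itself is zero.
-/

open scoped InnerProductSpace ComplexInnerProductSpace

noncomputable section

/-- The subspace `D_{A|B}(S)` of `ℂ^{dB} ⊗ ℂ^{dB}`: the span of the vectors
`Σ_i ψ_{k,i} ⊗ conj(ψ_{l,i})` over ordered pairs `(k, l)` with `k ≠ l`, where
`ψ_k = Σ_i |i⟩ ⊗ ψ_{k,i}`. -/
def DAB (dA dB N : ℕ) (ψ : Fin N → EuclideanSpace ℂ (Fin dA × Fin dB)) :
    Submodule ℂ (EuclideanSpace ℂ (Fin dB × Fin dB)) :=
  Submodule.span ℂ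
    {v | ∃ k l : Fin N, k ≠ l ∧
      v = fun p : Fin dB × Fin dB => ∑ i : Fin dA, ψ k (i, p.1) * star (ψ l (i, p.2))}

/-- The trace functional on `ℂ^{dB} ⊗ ℂ^{dB}`, whose vectors are read as `dB × dB` matrices. -/
def traceForm (dB : ℕ) : EuclideanSpace ℂ (Fin dB × Fin dB) →ₗ[ℂ] ℂ where
  toFun v := ∑ b : Fin dB, v (b, b)
  map_add' u v := by simp [Finset.sum_add_distrib]
  map_smul' c v := by simp [Finset.mul_sum]

lemma DAB_le_ker_traceForm (dA dB N : ℕ) (ψ : Fin N → EuclideanSpace ℂ (Fin dA × Fin dB))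
    (horth : ∀ k l : Fin N, k ≠ l → ⟪ψ k, ψ l⟫_ℂ = 0) :
    DAB dA dB N ψ ≤ LinearMap.ker (traceForm dB) := by
  refine Submodule.span_le.mpr ?_
  rintro v ⟨k, l, hkl, hv⟩
  have h := horth l k hkl.symm
  rw [PiLp.inner_apply, Fintype.sum_prod_type, Finset.sum_comm] at h
  change ∑ b : Fin dB, v (b, b) = 0
  rw [← h]
  refine Finset.sum_congr rfl fun b _ => ?_
  rw [hv]
  rfl

/-- for a set of pairwise orthogonal vectors in `ℂ^{dA} ⊗ ℂ^{dB}`,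
`dim D_{A|B}(S) ≤ dB² − 1`. -/
theorem finrank_DAB_le (dA dB N : ℕ) (ψ : Fin N → EuclideanSpace ℂ (Fin dA × Fin dB))
    (horth : ∀ k l : Fin N, k ≠ l → ⟪ψ k, ψ l⟫_ℂ = 0) :
    Module.finrank ℂ (DAB dA dB N ψ) ≤ dB ^ 2 - 1 := by
  rcases Nat.eq_zero_or_pos dB with rfl | hpos
  · have h := Submodule.finrank_le (DAB dA 0 N ψ)
    simpa using h
  · have hne : LinearMap.ker (traceForm dB) ≠ ⊤ := by
      intro htop
      let b : Fin dB := ⟨0, hpos⟩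
      -- The elementary vector `e_b ⊗ e_b` has trace `1`.
      have h0 : EuclideanSpace.single (b, b) (1 : ℂ) ∈ LinearMap.ker (traceForm dB) := by
        rw [htop]
        trivial
      simp [traceForm] at h0
    have hlt := Submodule.finrank_lt (lt_of_le_of_lt
      (DAB_le_ker_traceForm dA dB N ψ horth) (lt_top_iff_ne_top.mpr hne)).ne
    have hdim : Module.finrank ℂ (EuclideanSpace ℂ (Fin dB × Fin dB)) = dB ^ 2 := by
      simp [sq]
    omega
end
end

section
/- Let n ≥ 1. For each i = (i_1, …, i_n) ∈ {0,1}ⁿ, define θ_l = i_1 + ⋯ + i_{l−1} (with θ_1 = 0) and Z(θ) = |0⟩⟨0| + (−1)^θ |1⟩⟨1|. Then (⊗_{l=1}^n Z(θ_l) X^{i_l}) · U_n^{(W)} |i⟩ = W_n, where W_n = Σ_{l=1}^n |0⟩^{⊗(l−1)} ⊗ |1⟩ ⊗ |0⟩^{⊗(n−l)} is the n-qubit W state. In particular, every vector U_n^{(W)} |i⟩ is mapped to the n-qubit W state by a tensor product of 2×2 unitary operators, i.e., it is locally unitary equivalent to W_n. -/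
/-!
Since `X|b⟩ = |1 - b⟩` and `Z|b⟩ = (-1)^b |b⟩`, the `l`-th summand of `U_n^{(W)}` sends `|i⟩` to
`(-1)^{θ_l}` times `|i⟩` with its `l`-th bit flipped. The factors `X^{i_j}` turn this flipped word
into `|e_l⟩`, and the factors `Z(θ_j)` multiply `|e_l⟩` by `(-1)^{θ_l}`, as only the `l`-th bit is
`1`. The two signs cancel, and summing over `l` gives `W_n`.

The tensor products reduce this to `2 × 2` matrices: by distributivity the product of two tensor
products is computed factorwise (`sum_prod_mul_prod`), and each factor is read off from
`local_entry`.
-/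

open Matrix

noncomputable section

/-- The Pauli `X` matrix. -/
def Xmat : Matrix (Fin 2) (Fin 2) ℂ := !![0, 1; 1, 0]

/-- The Pauli `Z` matrix. -/
def Zmat : Matrix (Fin 2) (Fin 2) ℂ := !![1, 0; 0, -1]

/-- The operator `U_n^{(W)} = Σ_{l=1}^n Z^{⊗(l−1)} ⊗ X ⊗ I^{⊗(n−l)}` on `(ℂ²)^{⊗n}`,
written entrywise. -/
def UW (n : ℕ) : Matrix (Fin n → Fin 2) (Fin n → Fin 2) ℂ :=
  fun x y => ∑ l : Fin n, ∏ j : Fin n,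
    (if j < l then Zmat else if j = l then Xmat else 1) (x j) (y j)

/-- The matrix `Z(θ) = |0⟩⟨0| + (−1)^θ |1⟩⟨1|`. -/
def Zth (θ : ℕ) : Matrix (Fin 2) (Fin 2) ℂ := !![1, 0; 0, (-1) ^ θ]

/-- Entrywise form of `(⊗ A_j) (⊗ B_j) = ⊗ (A_j B_j)`. -/
lemma sum_prod_mul_prod {n : ℕ} (A B : Fin n → Matrix (Fin 2) (Fin 2) ℂ) (x z : Fin n → Fin 2) :
    ∑ y : Fin n → Fin 2, (∏ j, A j (x j) (y j)) * ∏ j, B j (y j) (z j) =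
      ∏ j, (A j * B j) (x j) (z j) := by
  simp only [Matrix.mul_apply, Finset.prod_univ_sum, Fintype.piFinset_univ,
    Finset.prod_mul_distrib]

/-- The single-qubit computation: applied to `|b⟩`, the factor at position `j` of the `l`-th
summand gives `|1⟩` if `j = l` and `|0⟩` otherwise, up to a sign. -/
lemma local_entry {n : ℕ} (l j : Fin n) (t : ℕ) (a b : Fin 2) :
    (Zth t * Xmat ^ (b : ℕ) * (if j < l then Zmat else if j = l then Xmat else 1)) a b =
      (if a = (if j = l then 1 else 0) then 1 else 0) *
        ((if j < l then (-1) ^ (b : ℕ) else 1) * (if j = l then (-1) ^ t else 1)) := by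
  rcases lt_trichotomy j l with h | h | h
  · fin_cases a <;> fin_cases b <;>
      simp [h, h.ne, Zth, Xmat, Zmat, Matrix.mul_apply, Fin.sum_univ_two]
  · fin_cases a <;> fin_cases b <;>
      simp [h, Zth, Xmat, Matrix.mul_apply, Fin.sum_univ_two]
  · fin_cases a <;> fin_cases b <;>
      simp [h.not_gt, h.ne', Zth, Xmat, Matrix.mul_apply, Fin.sum_univ_two]

/-- with `θ_l = i_1 + ⋯ + i_{l−1}`, the tensor product of the local unitaries
`Z(θ_l) X^{i_l}` maps `U_n^{(W)}|i⟩` to the `n`-qubit `W` state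
`W_n = Σ_l |0⟩^{⊗(l−1)} ⊗ |1⟩ ⊗ |0⟩^{⊗(n−l)}`; i.e. `U_n^{(W)}|i⟩` is locally unitary
equivalent to `W_n`. -/
theorem UW_basis_locally_equivalent_W (n : ℕ) (hn : 1 ≤ n) (i : Fin n → Fin 2)
    (θ : Fin n → ℕ)
    (hθ : ∀ l : Fin n, θ l = ∑ j ∈ Finset.univ.filter (fun j => j < l), (i j : ℕ))
    (V : Matrix (Fin n → Fin 2) (Fin n → Fin 2) ℂ)
    (hV : ∀ x y, V x y = ∏ l : Fin n, (Zth (θ l) * Xmat ^ ((i l : ℕ))) (x l) (y l))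
    (Wn : (Fin n → Fin 2) → ℂ)
    (hW : Wn = ∑ l : Fin n, Pi.single (fun j => if j = l then 1 else 0) (1 : ℂ)) :
    V.mulVec ((UW n).mulVec (Pi.single i 1)) = Wn := by
  subst hW
  funext x
  have hterm : ∀ l : Fin n,
      ∏ j, (Zth (θ j) * Xmat ^ (i j : ℕ) *
        (if j < l then Zmat else if j = l then Xmat else 1)) (x j) (i j) =
      (Pi.single (fun j => if j = l then 1 else 0) (1 : ℂ) : (Fin n → Fin 2) → ℂ) x := by
    intro l
    -- The signs `(-1)^{i_j}` for `j < l` multiply to `(-1)^{θ_l}`, cancelling the one from `Z(θ_l)`.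
    have hsign : (∏ j, if j < l then (-1 : ℂ) ^ (i j : ℕ) else 1) *
        (∏ j, if j = l then (-1 : ℂ) ^ θ j else 1) = 1 := by
      rw [← Finset.prod_filter, Finset.prod_pow_eq_pow_sum, ← hθ l, Finset.prod_ite_eq' Finset.univ l]
      simp [← mul_pow]
    simp only [local_entry, Finset.prod_mul_distrib, hsign, mul_one]
    simp [Finset.prod_ite_zero, Pi.single_apply, funext_iff]
  rw [Finset.sum_apply, Matrix.mulVec_single_one]
  simp only [Matrix.mulVec, dotProduct, Matrix.col_apply, UW, hV, Finset.mul_sum]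
  rw [Finset.sum_comm]
  refine Finset.sum_congr rfl fun l _ => ?_
  rw [← hterm l]
  exact sum_prod_mul_prod (fun j => Zth (θ j) * Xmat ^ (i j : ℕ))
    (fun j => if j < l then Zmat else if j = l then Xmat else 1) x i
end
end
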